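/- Let d ≥ 1 and let n : ℝ^d → ℝ and u : ℝ^d → ℝ^d be C^∞ ℤ^d-periodic functions with n(x) > 0 for every x. Then ∫_{T^d} Σ_i ( Σ_j ∂_j( n ∂_j u_i ) ) ∂_i(log n) dx = 2 ∫_{T^d} n ∇( Δ√n / √n ) · u dx; that is, ∫_{T^d} div(n ∇u) · ∇ log n dx = 2 ∫_{T^d} n u · ∇( Δ√n / √n ) dx. -/

import Mathlib

open MeasureTheory

/-- The `i`-th partial derivative of `f : ℝ^d → ℝ`. -/
noncomputable def pd {d : ℕ} (i : Fin d) (f : (Fin d → ℝ) → ℝ) (x : Fin d → ℝ) : ℝ :=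
  fderiv ℝ f x (Pi.single i 1)

/-!
The operator `f ↦ div(n ∇f)` is symmetric on periodic functions, so the left-hand side equals
`∫ div(n ∇ ∂ᵢ log n) uᵢ` summed over `i`. Since `∇n = n ∇ log n`, both `div(n ∇ ∂ᵢ log n)` and
`2 n ∂ᵢ(Δ√n / √n)` are equal to `n ∂ᵢ(Δ log n + |∇ log n|² / 2)`.
-/

section PartialDerivative

variable {d : ℕ} {f g : (Fin d → ℝ) → ℝ} {x : Fin d → ℝ}

theorem pd_add (i : Fin d) (hf : DifferentiableAt ℝ f x) (hg : DifferentiableAt ℝ g x) :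
    pd i (fun y => f y + g y) x = pd i f x + pd i g x := by
  simp [pd, fderiv_fun_add hf hg]

theorem pd_mul (i : Fin d) (hf : DifferentiableAt ℝ f x) (hg : DifferentiableAt ℝ g x) :
    pd i (fun y => f y * g y) x = pd i f x * g x + f x * pd i g x := by
  simp only [pd, fderiv_fun_mul hf hg, add_apply, smul_apply, smul_eq_mul]
  ring

theorem pd_const_mul (i : Fin d) (c : ℝ) (hf : DifferentiableAt ℝ f x) :
    pd i (fun y => c * f y) x = c * pd i f x := by
  simp [pd, fderiv_const_mul hf]

theorem pd_sum {ι : Type*} (i : Fin d) (s : Finset ι) {F : ι → (Fin d → ℝ) → ℝ}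
    (hF : ∀ k ∈ s, DifferentiableAt ℝ (F k) x) :
    pd i (fun y => ∑ k ∈ s, F k y) x = ∑ k ∈ s, pd i (F k) x := by
  simp [pd, fderiv_fun_sum hF]

theorem pd_log (i : Fin d) (hf : DifferentiableAt ℝ f x) (hx : f x ≠ 0) :
    pd i (fun y => Real.log (f y)) x = pd i f x / f x := by
  simp [pd, fderiv.log hf hx, div_eq_inv_mul]

theorem pd_sqrt (i : Fin d) (hf : DifferentiableAt ℝ f x) (hx : f x ≠ 0) :
    pd i (fun y => √(f y)) x = pd i f x / (2 * √(f x)) := by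
  simp [pd, fderiv_sqrt hf hx, div_eq_inv_mul]

theorem pd_comm (i j : Fin d) (hf : ContDiffAt ℝ 2 f x) :
    pd i (pd j f) x = pd j (pd i f) x := by
  have hf' : DifferentiableAt ℝ (fderiv ℝ f) x :=
    (hf.fderiv_right (m := 1) (by norm_num)).differentiableAt one_ne_zero
  have pd_pd (k l : Fin d) :
      pd k (pd l f) x = fderiv ℝ (fderiv ℝ f) x (Pi.single k 1) (Pi.single l 1) := by
    change fderiv ℝ (fun y => fderiv ℝ f y (Pi.single l 1)) x (Pi.single k 1) = _
    simp [fderiv_clm_apply hf' (differentiableAt_const _)]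
  rw [pd_pd, pd_pd, (hf.isSymmSndFDerivAt (by simp)).eq]

theorem contDiff_pd {m k : WithTop ℕ∞} (i : Fin d) (hf : ContDiff ℝ k f) (hmk : m + 1 ≤ k) :
    ContDiff ℝ m (pd i f) :=
  (hf.fderiv_right hmk).clm_apply contDiff_const

theorem periodic_pd {c : Fin d → ℝ} (i : Fin d) (hf : Function.Periodic f c) :
    Function.Periodic (pd i f) c := fun x => by
  rw [pd, ← fderiv_comp_add_right, funext hf, pd]

end PartialDerivative

section IntegrationByParts

variable {d : ℕ} {a b : Fin d → ℝ} {f g : (Fin d → ℝ) → ℝ}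

theorem insertNth_add_single {α : Type*} [AddZeroClass α] {m : ℕ} (j : Fin (m + 1)) (s t : α)
    (y : Fin m → α) :
    (j.insertNth s y : Fin (m + 1) → α) + Pi.single j t = j.insertNth (s + t) y := by
  ext k
  refine Fin.succAboveCases j ?_ (fun l => ?_) k <;> simp

theorem integral_pd_eq_zero (hab : a ≤ b) {j : Fin d} (hf : ContDiff ℝ 1 f)
    (hper : Function.Periodic f (Pi.single j (b j - a j))) :
    ∫ x in Set.Icc a b, pd j f x = 0 := by
  obtain _ | m := d
  · exact j.elim0
  let F : Fin (m + 1) → (Fin (m + 1) → ℝ) → ℝ := Pi.single j f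
  let F' : Fin (m + 1) → (Fin (m + 1) → ℝ) → (Fin (m + 1) → ℝ) →L[ℝ] ℝ :=
    Pi.single j (fderiv ℝ f)
  have hF (i x) : HasFDerivAt (F i) (F' i x) x := by
    obtain rfl | hij := eq_or_ne i j
    · simpa [F, F'] using (hf.differentiable one_ne_zero x).hasFDerivAt
    · simpa [F, F', hij] using hasFDerivAt_zero x
  have hdiv (x) : ∑ i, F' i x (Pi.single i 1) = pd j f x := by
    rw [Finset.sum_eq_single j (fun i _ hij => by simp [F', hij]) (by simp)]
    simp [F', pd]
  have hface (i y) : F i (i.insertNth (b i) y) = F i (i.insertNth (a i) y) := by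
    obtain rfl | hij := eq_or_ne i j
    · rw [← add_sub_cancel (a i) (b i), ← insertNth_add_single]
      simpa [F] using hper _
    · simp [F, hij]
  have hint : IntegrableOn (pd j f) (Set.Icc a b) :=
    (contDiff_pd (m := 0) j hf (by simp)).continuous.integrableOn_Icc
  have divergence_theorem := integral_divergence_of_hasFDerivAt_off_countable' a b hab F F' ∅
    Set.countable_empty (fun i x _ => (hF i x).continuousAt.continuousWithinAt)
    (fun x _ i => hF i x) (by simpa only [hdiv] using hint)
  simpa only [hdiv, hface, sub_self, Finset.sum_const_zero] using divergence_theorem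

theorem integral_pd_mul_eq_neg_integral_mul_pd (hab : a ≤ b) {j : Fin d}
    (hf : ContDiff ℝ 1 f) (hg : ContDiff ℝ 1 g)
    (hfper : Function.Periodic f (Pi.single j (b j - a j)))
    (hgper : Function.Periodic g (Pi.single j (b j - a j))) :
    ∫ x in Set.Icc a b, pd j f x * g x = -∫ x in Set.Icc a b, f x * pd j g x := by
  have hf' : Continuous (pd j f) := (contDiff_pd (m := 0) j hf (by simp)).continuous
  have hg' : Continuous (pd j g) := (contDiff_pd (m := 0) j hg (by simp)).continuous
  rw [← add_eq_zero_iff_eq_neg, ← integral_add (hf'.fun_mul hg.continuous).integrableOn_Icc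
    (hf.continuous.fun_mul hg').integrableOn_Icc, ← integral_pd_eq_zero hab (hf.mul hg)
    (hfper.mul hgper)]
  exact integral_congr_ae (.of_forall fun x => (pd_mul j (hf.differentiable one_ne_zero x)
    (hg.differentiable one_ne_zero x)).symm)

end IntegrationByParts

section WeightedLaplacian

variable {d : ℕ} {a b : Fin d → ℝ} {n f g : (Fin d → ℝ) → ℝ}

/-- The weighted Laplacian `div(n ∇f)` of `f`, with weight `n`. -/
noncomputable def weightedLaplacian (n f : (Fin d → ℝ) → ℝ) (x : Fin d → ℝ) : ℝ :=
  ∑ j, pd j (fun y => n y * pd j f y) x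

theorem contDiff_one_mul_pd (hn : ContDiff ℝ 1 n) (hf : ContDiff ℝ 2 f) (j : Fin d) :
    ContDiff ℝ 1 (fun y => n y * pd j f y) :=
  hn.mul (contDiff_pd j hf (by norm_num))

theorem continuous_pd_mul_pd (hn : ContDiff ℝ 1 n) (hf : ContDiff ℝ 2 f) (j : Fin d) :
    Continuous (pd j fun y => n y * pd j f y) :=
  (contDiff_pd (m := 0) j (contDiff_one_mul_pd hn hf j) (by simp)).continuous

theorem continuous_weightedLaplacian (hn : ContDiff ℝ 1 n) (hf : ContDiff ℝ 2 f) :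
    Continuous (weightedLaplacian n f) :=
  continuous_finsetSum _ fun j _ => continuous_pd_mul_pd hn hf j

theorem integral_weightedLaplacian_mul (hab : a ≤ b)
    (hn : ContDiff ℝ 1 n) (hf : ContDiff ℝ 2 f) (hg : ContDiff ℝ 1 g)
    (hnper : ∀ j, Function.Periodic n (Pi.single j (b j - a j)))
    (hfper : ∀ j, Function.Periodic f (Pi.single j (b j - a j)))
    (hgper : ∀ j, Function.Periodic g (Pi.single j (b j - a j))) :
    ∫ x in Set.Icc a b, weightedLaplacian n f x * g x
      = -∑ j, ∫ x in Set.Icc a b, n x * pd j f x * pd j g x := by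
  simp only [weightedLaplacian, Finset.sum_mul]
  rw [integral_finsetSum _ fun j _ =>
    ((continuous_pd_mul_pd hn hf j).fun_mul hg.continuous).integrableOn_Icc,
    ← Finset.sum_neg_distrib]
  exact Finset.sum_congr rfl fun j _ =>
    integral_pd_mul_eq_neg_integral_mul_pd hab (contDiff_one_mul_pd hn hf j) hg
      ((hnper j).mul (periodic_pd j (hfper j))) (hgper j)

theorem integral_weightedLaplacian_mul_comm (hab : a ≤ b)
    (hn : ContDiff ℝ 1 n) (hf : ContDiff ℝ 2 f) (hg : ContDiff ℝ 2 g)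
    (hnper : ∀ j, Function.Periodic n (Pi.single j (b j - a j)))
    (hfper : ∀ j, Function.Periodic f (Pi.single j (b j - a j)))
    (hgper : ∀ j, Function.Periodic g (Pi.single j (b j - a j))) :
    ∫ x in Set.Icc a b, weightedLaplacian n f x * g x
      = ∫ x in Set.Icc a b, weightedLaplacian n g x * f x := by
  rw [integral_weightedLaplacian_mul hab hn hf (hg.of_le one_le_two) hnper hfper hgper,
    integral_weightedLaplacian_mul hab hn hg (hf.of_le one_le_two) hnper hgper hfper]
  simp only [mul_right_comm]

end WeightedLaplacian

section BohmPotential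

variable {d : ℕ} {n : (Fin d → ℝ) → ℝ}

/-- The Bohm (quantum) potential `Δ√n / √n` of a density `n`, without the physical prefactor. -/
noncomputable def bohmPotential (n : (Fin d → ℝ) → ℝ) (x : Fin d → ℝ) : ℝ :=
  (∑ j, pd j (pd j fun z => √(n z)) x) / √(n x)

theorem contDiff_pd_log {m k : WithTop ℕ∞} (i : Fin d) (hn : ContDiff ℝ k n)
    (hne : ∀ x, n x ≠ 0) (hmk : m + 1 ≤ k) : ContDiff ℝ m (pd i fun y => Real.log (n y)) :=
  contDiff_pd i (hn.log hne) hmk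

theorem pd_eq_mul_pd_log (i : Fin d) {x : Fin d → ℝ} (hn : DifferentiableAt ℝ n x)
    (hx : n x ≠ 0) : pd i n x = n x * pd i (fun y => Real.log (n y)) x := by
  rw [pd_log i hn hx, mul_div_cancel₀ _ hx]

theorem pd_sqrt_eq_mul_pd_log (i : Fin d) {x : Fin d → ℝ} (hn : DifferentiableAt ℝ n x)
    (hx : 0 < n x) :
    pd i (fun y => √(n y)) x = 1 / 2 * (√(n x) * pd i (fun y => Real.log (n y)) x) := by
  have hsqrt : √(n x) ≠ 0 := (Real.sqrt_pos.2 hx).ne'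
  rw [pd_sqrt i hn hx.ne', pd_eq_mul_pd_log i hn hx.ne']
  field_simp
  rw [Real.sq_sqrt hx.le, mul_comm]

theorem pd_pd_sqrt_eq_mul_pd_log (j : Fin d) (hn : ContDiff ℝ 2 n) (hpos : ∀ x, 0 < n x)
    (x : Fin d → ℝ) :
    pd j (pd j fun z => √(n z)) x
      = √(n x) * (1 / 2 * pd j (pd j fun y => Real.log (n y)) x
        + 1 / 4 * (pd j (fun y => Real.log (n y)) x * pd j (fun y => Real.log (n y)) x)) := by
  have hn' : Differentiable ℝ n := hn.differentiable two_ne_zero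
  have hlog : DifferentiableAt ℝ (pd j fun y => Real.log (n y)) x :=
    (contDiff_pd_log (m := 1) j hn (fun y => (hpos y).ne') (by norm_num)).differentiable
      one_ne_zero x
  have hsqrt : DifferentiableAt ℝ (fun y => √(n y)) x := (hn' x).sqrt (hpos x).ne'
  have hpd : (pd j fun y => √(n y))
      = fun y => 1 / 2 * (√(n y) * pd j (fun z => Real.log (n z)) y) :=
    funext fun y => pd_sqrt_eq_mul_pd_log j (hn' y) (hpos y)
  rw [hpd, pd_const_mul j _ (hsqrt.fun_mul hlog), pd_mul j hsqrt hlog,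
    pd_sqrt_eq_mul_pd_log j (hn' x) (hpos x)]
  ring

theorem bohmPotential_eq_sum_pd_log (hn : ContDiff ℝ 2 n) (hpos : ∀ x, 0 < n x) (x : Fin d → ℝ) :
    bohmPotential n x = ∑ j, (1 / 2 * pd j (pd j fun y => Real.log (n y)) x
      + 1 / 4 * (pd j (fun y => Real.log (n y)) x * pd j (fun y => Real.log (n y)) x)) := by
  simp only [bohmPotential, pd_pd_sqrt_eq_mul_pd_log _ hn hpos, ← Finset.mul_sum]
  exact mul_div_cancel_left₀ _ (Real.sqrt_pos.2 (hpos x)).ne'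

theorem pd_bohmPotential (i : Fin d) (hn : ContDiff ℝ 3 n) (hpos : ∀ x, 0 < n x)
    (x : Fin d → ℝ) :
    pd i (bohmPotential n) x = 1 / 2 * ∑ j, (pd i (pd j (pd j fun y => Real.log (n y))) x
      + pd j (fun y => Real.log (n y)) x * pd i (pd j fun y => Real.log (n y)) x) := by
  have hgrad (j) : ContDiff ℝ 2 (pd j fun y => Real.log (n y)) :=
    contDiff_pd_log j hn (fun y => (hpos y).ne') (by norm_num)
  have hgrad' (j) : DifferentiableAt ℝ (pd j fun y => Real.log (n y)) x :=
    (hgrad j).differentiable two_ne_zero x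
  have hhess (j) : DifferentiableAt ℝ (pd j (pd j fun y => Real.log (n y))) x :=
    (contDiff_pd (m := 1) j (hgrad j) (by norm_num)).differentiable one_ne_zero x
  have hsq (j) : DifferentiableAt ℝ
      (fun y => pd j (fun z => Real.log (n z)) y * pd j (fun z => Real.log (n z)) y) x :=
    (hgrad' j).fun_mul (hgrad' j)
  rw [funext (bohmPotential_eq_sum_pd_log (hn.of_le (by norm_num)) hpos),
    pd_sum i _ fun j _ => ((hhess j).const_mul _).fun_add ((hsq j).const_mul _),
    Finset.mul_sum]
  refine Finset.sum_congr rfl fun j _ => ?_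
  rw [pd_add i ((hhess j).const_mul _) ((hsq j).const_mul _), pd_const_mul i _ (hhess j),
    pd_const_mul i _ (hsq j), pd_mul i (hgrad' j) (hgrad' j)]
  ring

theorem weightedLaplacian_pd_log (i : Fin d) (hn : ContDiff ℝ 3 n) (hpos : ∀ x, 0 < n x)
    (x : Fin d → ℝ) :
    weightedLaplacian n (pd i fun y => Real.log (n y)) x
      = 2 * (n x * pd i (bohmPotential n) x) := by
  have hn' : DifferentiableAt ℝ n x := hn.differentiable three_ne_zero x
  have hlog : ContDiff ℝ 2 fun y => Real.log (n y) :=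
    (hn.of_le (by norm_num)).log fun y => (hpos y).ne'
  have hgrad (j) : ContDiff ℝ 2 (pd j fun y => Real.log (n y)) :=
    contDiff_pd_log j hn (fun y => (hpos y).ne') (by norm_num)
  have hhess (j) : DifferentiableAt ℝ (pd j (pd i fun y => Real.log (n y))) x :=
    (contDiff_pd (m := 1) j (hgrad i) (by norm_num)).differentiable one_ne_zero x
  have hcomm (j) : pd j (pd i fun y => Real.log (n y)) = pd i (pd j fun y => Real.log (n y)) :=
    funext fun y => pd_comm j i hlog.contDiffAt
  rw [pd_bohmPotential i hn hpos, weightedLaplacian, Finset.mul_sum, Finset.mul_sum,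
    Finset.mul_sum]
  refine Finset.sum_congr rfl fun j _ => ?_
  rw [pd_mul j hn' (hhess j), pd_eq_mul_pd_log j hn' (hpos x).ne', hcomm,
    pd_comm j i (hgrad j).contDiffAt]
  ring

end BohmPotential

theorem periodic_single_of_intPeriodic {d : ℕ} {α : Type*} {f : (Fin d → ℝ) → α}
    (hf : ∀ (z : Fin d → ℤ) (x : Fin d → ℝ), f (x + fun i => (z i : ℝ)) = f x) (j : Fin d) :
    Function.Periodic f (Pi.single j 1) := fun x => by
  have hcast : (fun i => ((Pi.single j 1 : Fin d → ℤ) i : ℝ)) = Pi.single j 1 := by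
    ext i
    obtain rfl | hij := eq_or_ne i j <;> simp [*]
  rw [← hcast, hf]

theorem viscous_term_against_grad_log_general {d : ℕ} {a b : Fin d → ℝ} (hab : a ≤ b)
    {n : (Fin d → ℝ) → ℝ} {u : (Fin d → ℝ) → Fin d → ℝ}
    (hn : ContDiff ℝ 3 n) (hu : ContDiff ℝ 2 u) (hpos : ∀ x, 0 < n x)
    (hnper : ∀ j, Function.Periodic n (Pi.single j (b j - a j)))
    (huper : ∀ j, Function.Periodic u (Pi.single j (b j - a j))) :
    ∫ x in Set.Icc a b, ∑ i, weightedLaplacian n (fun z => u z i) x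
        * pd i (fun y => Real.log (n y)) x
      = 2 * ∫ x in Set.Icc a b, ∑ i, n x * pd i (bohmPotential n) x * u x i := by
  have hn₁ : ContDiff ℝ 1 n := hn.of_le (by norm_num)
  have hui (i) : ContDiff ℝ 2 fun z => u z i := contDiff_pi.1 hu i
  have hgrad (i) : ContDiff ℝ 2 (pd i fun y => Real.log (n y)) :=
    contDiff_pd_log i hn (fun y => (hpos y).ne') (by norm_num)
  calc
    _ = ∑ i, ∫ x in Set.Icc a b, weightedLaplacian n (fun z => u z i) x
          * pd i (fun y => Real.log (n y)) x :=
      integral_finsetSum _ fun i _ => ((continuous_weightedLaplacian hn₁ (hui i)).mul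
        (hgrad i).continuous).integrableOn_Icc
    _ = ∑ i, ∫ x in Set.Icc a b, weightedLaplacian n (pd i fun y => Real.log (n y)) x * u x i :=
      Finset.sum_congr rfl fun i _ =>
        integral_weightedLaplacian_mul_comm hab hn₁ (hui i) (hgrad i) hnper
          (fun j => (huper j).comp (· i)) fun j => periodic_pd i ((hnper j).comp Real.log)
    _ = ∫ x in Set.Icc a b, ∑ i,
          weightedLaplacian n (pd i fun y => Real.log (n y)) x * u x i :=
      (integral_finsetSum _ fun i _ => ((continuous_weightedLaplacian hn₁ (hgrad i)).mul
        (hui i).continuous).integrableOn_Icc).symm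
    _ = 2 * ∫ x in Set.Icc a b, ∑ i, n x * pd i (bohmPotential n) x * u x i := by
      simp only [weightedLaplacian_pd_log _ hn hpos, mul_assoc, ← Finset.mul_sum,
        integral_const_mul]

/-- For smooth `ℤ^d`-periodic `n > 0` and `u`:
`∫_{T^d} div(n ∇u) · ∇ log n = 2 ∫_{T^d} n u · ∇(Δ√n/√n)`. -/
theorem viscous_term_against_grad_log (d : ℕ) (hd : 1 ≤ d) (n : (Fin d → ℝ) → ℝ)
    (u : (Fin d → ℝ) → Fin d → ℝ)
    (hn : ContDiff ℝ (⊤ : ℕ∞) n) (hu : ContDiff ℝ (⊤ : ℕ∞) u) (hpos : ∀ x, 0 < n x)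
    (hnper : ∀ (z : Fin d → ℤ) (x : Fin d → ℝ), n (x + fun i => (z i : ℝ)) = n x)
    (huper : ∀ (z : Fin d → ℤ) (x : Fin d → ℝ), u (x + fun i => (z i : ℝ)) = u x) :
    (∫ x in Set.Icc (0 : Fin d → ℝ) 1, ∑ i : Fin d,
        (∑ j : Fin d, pd j (fun y => n y * pd j (fun z => u z i) y) x)
          * pd i (fun y => Real.log (n y)) x)
      = 2 * ∫ x in Set.Icc (0 : Fin d → ℝ) 1, ∑ i : Fin d,
          n x * pd i (fun y =>
            (∑ j : Fin d, pd j (pd j (fun z => Real.sqrt (n z))) y) / Real.sqrt (n y)) x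
            * u x i :=
  viscous_term_against_grad_log_general zero_le_one (contDiff_infty.1 hn 3) (contDiff_infty.1 hu 2)
    hpos (by simpa using periodic_single_of_intPeriodic hnper)
    (by simpa using periodic_single_of_intPeriodic huper)
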